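/- Let G be a Grothendieck category, W an injective cogenerator of G, and T a classical tilting object of G; set R = End_G(T). Then the cohomologies of the complex RHom_G(T,W) ∈ D(R) vanish in all degrees different from zero, so RHom_G(T,W) ≅ C in D(R) for some right R-module C. If moreover there exists n ≥ 0 such that Ext^{n+1}_G(T,−) ≡ 0, then C is a big n-cotilting R-module. -/

import Mathlib

/-!
Statement 1: Let `G` be a Grothendieck category, `W` an injective cogenerator, `T` a classical
tilting object, `R = End_G(T)`.  Then the derived equivalence `D(G) ≌ D(Mod-R)` (any triangle
equivalence sending `T` to `R`) sends `W` to a complex with cohomology concentrated in degree `0`,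
hence isomorphic to a module `C`; and if `Ext^{n+1}_G(T,-) ≡ 0` then `C` is big `n`-cotilting.
(Right `R`-modules are formalized as `ModuleCat R` over an arbitrary ring `R`.)
-/

universe e w₂ w v₂ u₂ v u

open CategoryTheory Category Limits Pretriangulated

namespace PaperStmt

/-- A triangle equivalence: an equivalence of categories commuting with the shift and
preserving distinguished triangles. -/
structure TriangleEquivalenceData (D₁ : Type u) (D₂ : Type u₂)
    [Category.{v} D₁] [Category.{v₂} D₂]
    [HasZeroObject D₁] [HasZeroObject D₂] [Preadditive D₁] [Preadditive D₂]
    [HasShift D₁ ℤ] [HasShift D₂ ℤ]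
    [∀ n : ℤ, (shiftFunctor D₁ n).Additive] [∀ n : ℤ, (shiftFunctor D₂ n).Additive]
    [Pretriangulated D₁] [Pretriangulated D₂] where
  functor : D₁ ⥤ D₂
  commShift : functor.CommShift ℤ
  isTriangulated : letI := commShift; functor.IsTriangulated
  isEquivalence : functor.IsEquivalence

variable {R : Type v₂} [Ring R]

/-- `M` belongs to `Prod C`: it is a direct summand of a product of copies of `C`. -/
def InProdOf (C M : ModuleCat.{v₂} R) : Prop :=
  ∃ (ι : Type v₂) (s : M ⟶ ∏ᶜ (fun _ : ι => C)) (r : (∏ᶜ (fun _ : ι => C)) ⟶ M),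
    s ≫ r = 𝟙 M

/-- `C` has injective dimension at most `n`: there is an exact sequence
`0 → C → E⁰ → ⋯ → Eⁿ → 0` with all `Eⁱ` injective. -/
def InjDimLE (C : ModuleCat.{v₂} R) (n : ℕ) : Prop :=
  ∃ S : ComposableArrows (ModuleCat.{v₂} R) (n + 3),
    S.Exact ∧ IsZero (S.obj 0) ∧ IsZero (S.obj (Fin.last (n + 3))) ∧
    Nonempty (S.obj ⟨1, by omega⟩ ≅ C) ∧
    ∀ (i : ℕ) (_ : 2 ≤ i) (_ : i ≤ n + 2), Injective (S.obj ⟨i, by omega⟩)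

/-- `C` is a big `n`-cotilting module: (BC1) it has injective dimension at most `n`;
(BC2) `Ext^j(Cᴵ, C) = 0` for all `j > 0` and all sets `I`; (BC3) there is an exact sequence
`0 → C_r → ⋯ → C_0 → Q → 0` with `Q` an injective cogenerator and all `C_i ∈ Prod C`. -/
def IsBigNCotilting [HasExt.{e} (ModuleCat.{v₂} R)] (n : ℕ) (C : ModuleCat.{v₂} R) : Prop :=
  InjDimLE C n ∧
  (∀ (ι : Type v₂) (j : ℕ), 0 < j →
      Subsingleton (Abelian.Ext (∏ᶜ (fun _ : ι => C)) C j)) ∧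
  (∃ (r : ℕ) (S : ComposableArrows (ModuleCat.{v₂} R) (r + 3)),
    S.Exact ∧ IsZero (S.obj 0) ∧ IsZero (S.obj (Fin.last (r + 3))) ∧
    (∀ (i : ℕ) (_ : 1 ≤ i) (_ : i ≤ r + 1), InProdOf C (S.obj ⟨i, by omega⟩)) ∧
    Injective (S.obj ⟨r + 2, by omega⟩) ∧ IsCoseparator (S.obj ⟨r + 2, by omega⟩))

end PaperStmt

open PaperStmt DerivedCategory

universe t



namespace PaperProof
open DerivedCategory

section General
variable {C : Type u} [Category.{v} C] [Abelian C] [HasDerivedCategory.{w} C]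

/-- Shifting `single i X` by `n`. -/
noncomputable def singleShift (X : C) (n a a' : ℤ) (h : n + a = a') :
    ((singleFunctor C a').obj X)⟦n⟧ ≅ (singleFunctor C a).obj X :=
  ((singleFunctors C).shiftIso n a a' h).app X

lemma eq_zero_of_conj {D : Type u} [Category.{v} D] [HasZeroMorphisms D] {X Y X' Y' : D}
    (e : X ≅ X') (e' : Y ≅ Y') (f : X ⟶ Y) (h : ∀ g : X' ⟶ Y', g = 0) : f = 0 := by
  have h1 := h (e.inv ≫ f ≫ e'.hom)
  have : f = e.hom ≫ (e.inv ≫ f ≫ e'.hom) ≫ e'.inv := by simp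
  rw [this, h1]; simp

lemma shift_hom_zero {X Y : DerivedCategory C} (n : ℤ) (f : X ⟶ Y)
    (h : ∀ g : X⟦n⟧ ⟶ Y⟦n⟧, g = 0) : f = 0 :=
  (shiftFunctor (DerivedCategory C) n).map_injective ((h _).trans ((shiftFunctor (DerivedCategory C) n).map_zero _ _).symm)

lemma ext_bridge [HasExt.{e} C] (X Y : C) (j : ℕ) (h : Subsingleton (Abelian.Ext.{e} X Y j))
    (i k : ℤ) (hik : i = k + j) (f : (singleFunctor C i).obj X ⟶ (singleFunctor C k).obj Y) :
    f = 0 := by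
  apply shift_hom_zero i
  intro g
  refine eq_zero_of_conj (singleShift X i 0 i (by simp))
    (singleShift Y i (-j) k (by omega) ≪≫ (singleShift Y j (-j) 0 (by omega)).symm) g ?_
  intro g
  have : Subsingleton ((singleFunctor C 0).obj X ⟶ ((singleFunctor C 0).obj Y)⟦(j : ℤ)⟧) :=
    (Abelian.Ext.homEquiv (X := X) (Y := Y) (n := j)).symm.subsingleton
  exact Subsingleton.elim _ _

lemma ext_bridge' [HasExt.{e} C] (X Y : C) (j : ℕ) (i k : ℤ) (hik : i = k + j)
    (h : ∀ (f : (singleFunctor C i).obj X ⟶ (singleFunctor C k).obj Y), f = 0) :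
    Subsingleton (Abelian.Ext.{e} X Y j) := by
  refine (Abelian.Ext.homEquiv (X := X) (Y := Y) (n := j)).subsingleton_congr.2 ?_
  suffices H : ∀ f : (singleFunctor C 0).obj X ⟶ ((singleFunctor C 0).obj Y)⟦(j : ℤ)⟧, f = 0 from
    ⟨fun a b => (H a).trans (H b).symm⟩
  intro f
  apply shift_hom_zero (-i)
  intro g
  refine eq_zero_of_conj (singleShift X (-i) i 0 (by simp))
    ((shiftFunctor (DerivedCategory C) (-i)).mapIso (singleShift Y j (-j) 0 (by omega)) ≪≫
      singleShift Y (-i) k (-j) (by omega)) g h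

lemma isGE_of_orth (Y : DerivedCategory C) (n : ℤ)
    (h : ∀ (X : DerivedCategory C) (_ : X.IsLE (n - 1)) (f : X ⟶ Y), f = 0) : Y.IsGE n := by
  rw [show Y.IsGE n ↔ _ from TStructure.t.isGE_iff_isZero_truncLT_obj n Y]
  have h0 := h ((TStructure.t.truncLT n).obj Y) (TStructure.t.isLE_truncLT_obj ..)
    ((TStructure.t.truncLTι n).app Y)
  rw [IsZero.iff_id_eq_zero]
  have hT := TStructure.t.triangleLTGE_distinguished n Y
  obtain ⟨g, hg⟩ := Triangle.coyoneda_exact₂ _ (inv_rot_of_distTriang _ hT)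
    (𝟙 ((TStructure.t.truncLT n).obj Y)) (by
      change _ ≫ (TStructure.t.truncLTι n).app Y = 0
      rw [h0, comp_zero])
  have hG : ((((TStructure.t.truncGE n).obj Y)⟦(-1 : ℤ)⟧) : DerivedCategory C).IsGE (n + 1) :=
    TStructure.t.isGE_shift _ n (-1) (n + 1) (by omega)
  have hL : ((TStructure.t.truncLT n).obj Y : DerivedCategory C).IsLE (n - 1) :=
    TStructure.t.isLE_truncLT_obj ..
  have : g = 0 := TStructure.t.zero_of_isLE_of_isGE _ (n-1) (n+1) (by omega) hL hG
  rw [hg, this]; exact zero_comp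

end General
end PaperProof

namespace PaperProof
open DerivedCategory
section General
variable {C : Type u} [Category.{v} C] [Abelian C] [HasDerivedCategory.{w} C]

/-- The single complex as the image of a cochain complex. -/
noncomputable def singleQ (A : C) (i : ℤ) : (singleFunctor C i).obj A ≅
    Q.obj ((HomologicalComplex.single C (.up ℤ) i).obj A) :=
  (singleFunctorIsoCompQ C i).app A

/-- The homology of the image of a cochain complex. -/
noncomputable def homQ (K : CochainComplex C ℤ) (i : ℤ) :
    (homologyFunctor C i).obj (Q.obj K) ≅ K.homology i :=
  (homologyFunctorFactors C i).app K

lemma homologyFunctor_map_Q_epi {K L : CochainComplex C ℤ} (f : K ⟶ L) (i : ℤ)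
    (h : Epi (HomologicalComplex.homologyMap f i)) : Epi ((homologyFunctor C i).map (Q.map f)) := by
  have e : Arrow.mk ((homologyFunctor C i).map (Q.map f)) ≅
      Arrow.mk (HomologicalComplex.homologyMap f i) :=
    Arrow.isoMk ((homologyFunctorFactors C i).app K) ((homologyFunctorFactors C i).app L)
      ((homologyFunctorFactors C i).hom.naturality f).symm
  exact ((MorphismProperty.epimorphisms C).arrow_mk_iso_iff e).2 h

lemma homologyFunctor_map_Q_mono {K L : CochainComplex C ℤ} (f : K ⟶ L) (i : ℤ)
    (h : Mono (HomologicalComplex.homologyMap f i)) :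
    Mono ((homologyFunctor C i).map (Q.map f)) := by
  have e : Arrow.mk ((homologyFunctor C i).map (Q.map f)) ≅
      Arrow.mk (HomologicalComplex.homologyMap f i) :=
    Arrow.isoMk ((homologyFunctorFactors C i).app K) ((homologyFunctorFactors C i).app L)
      ((homologyFunctorFactors C i).hom.naturality f).symm
  exact ((MorphismProperty.monomorphisms C).arrow_mk_iso_iff e).2 h

lemma homologyMap_eq_zero_of_Q {K L : CochainComplex C ℤ} (f : K ⟶ L) (i : ℤ)
    (h : (homologyFunctor C i).map (Q.map f) = 0) : HomologicalComplex.homologyMap f i = 0 := by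
  have h1 := (homologyFunctorFactors C i).hom.naturality f
  have h2 : (Q ⋙ homologyFunctor C i).map f = 0 := h
  rw [h2, zero_comp] at h1
  have h3 : (HomologicalComplex.homologyFunctor C (.up ℤ) i).map f = 0 := by
    rw [← cancel_epi ((homologyFunctorFactors C i).hom.app K), ← h1, comp_zero]
  exact h3

/-- Every homology object is covered by a map from a single complex. -/
lemma exists_cyc (Y : DerivedCategory C) (i : ℤ) :
    ∃ (A : C) (f : (singleFunctor C i).obj A ⟶ Y), Epi ((homologyFunctor C i).map f) := by
  let K := Q.objPreimage Y
  let φ : (HomologicalComplex.single C (.up ℤ) i).obj (K.cycles i) ⟶ K :=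
    HomologicalComplex.mkHomFromSingle (K.iCycles i) (fun k _ => K.iCycles_d i k)
  have hc : HomologicalComplex.cyclesMap φ i =
      HomologicalComplex.iCycles _ i ≫ (HomologicalComplex.singleObjXSelf (.up ℤ) i _).hom := by
    rw [← cancel_mono (K.iCycles i)]
    simp [φ, HomologicalComplex.mkHomFromSingle_f]
  have : IsIso (((HomologicalComplex.single C (.up ℤ) i).obj (K.cycles i)).iCycles i) :=
    HomologicalComplex.isIso_iCycles _ i _ rfl (by simp)
  have : Epi (HomologicalComplex.cyclesMap φ i) := by rw [hc]; infer_instance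
  have h1 : Epi (HomologicalComplex.homologyMap φ i) := by
    have : Epi (HomologicalComplex.homologyπ _ i ≫ HomologicalComplex.homologyMap φ i) := by
      rw [HomologicalComplex.homologyπ_naturality]; infer_instance
    exact epi_of_epi (HomologicalComplex.homologyπ _ i) _
  have h2 := homologyFunctor_map_Q_epi φ i h1
  refine ⟨K.cycles i, (singleQ _ i).hom ≫ Q.map φ ≫ (Q.objObjPreimageIso Y).hom, ?_⟩
  rw [Functor.map_comp, Functor.map_comp]; exact epi_comp _ _

lemma exists_chain_to_single (K : CochainComplex C ℤ) (I : C) [Injective I] (i : ℤ)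
    (f : Q.obj K ⟶ (singleFunctor C i).obj I) :
    ∃ g : K ⟶ (HomologicalComplex.single C (.up ℤ) i).obj I, Q.map g = f ≫ (singleQ I i).hom := by
  let L : CochainComplex C ℤ := (HomologicalComplex.single C (.up ℤ) i).obj I
  have hL : CochainComplex.IsKInjective L := by
    have : ∀ j, Injective (L.X j) := by
      intro j
      by_cases h : j = i
      · subst h
        exact Injective.of_iso (HomologicalComplex.singleObjXSelf (.up ℤ) j I).symm inferInstance
      · have := HomologicalComplex.isZero_single_obj_X (.up ℤ) i I j h
        exact this.injective
    have : CochainComplex.IsStrictlyGE L i := by dsimp [L]; infer_instance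
    exact CochainComplex.isKInjective_of_injective L i
  obtain ⟨g, hg⟩ := (CochainComplex.IsKInjective.Qh_map_bijective
    ((HomotopyCategory.quotient C _).obj K) L).surjective
      ((quotientCompQhIso C).hom.app K ≫ f ≫ (singleQ I i).hom ≫ (quotientCompQhIso C).inv.app L)
  obtain ⟨g, rfl⟩ := (HomotopyCategory.quotient C _).map_surjective g
  refine ⟨g, ?_⟩
  have := (quotientCompQhIso C).hom.naturality g
  rw [← cancel_epi ((quotientCompQhIso C).hom.app K), ← this]
  change (Qh (C := C)).map ((HomotopyCategory.quotient C _).map g) ≫ _ = _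
  rw [hg]
  have h3 := (quotientCompQhIso C).inv_hom_id_app L
  generalize (quotientCompQhIso C).inv.app L = x at *
  generalize (quotientCompQhIso C).hom.app L = y at *
  generalize (quotientCompQhIso C).hom.app K = z at *
  refine (assoc _ _ _).trans ?_
  congr 1
  refine (assoc _ _ _).trans ?_
  congr 1
  refine (assoc _ _ _).trans ?_
  exact (congrArg (fun t => (singleQ I i).hom ≫ t) h3).trans (comp_id _)

lemma inj_faithful (X : DerivedCategory C) (I : C) [Injective I] (i : ℤ)
    (f : X ⟶ (singleFunctor C i).obj I) (hf : (homologyFunctor C i).map f = 0) : f = 0 := by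
  let K := Q.objPreimage X
  let e := (Q.objObjPreimageIso X)
  obtain ⟨g, hg⟩ := exists_chain_to_single K I i (e.hom ≫ f)
  have h0 : (homologyFunctor C i).map (Q.map g) = 0 := by 
    rw [hg, Functor.map_comp, Functor.map_comp, hf, comp_zero, zero_comp]
  replace h0 := homologyMap_eq_zero_of_Q g i h0
  let S := (HomologicalComplex.single C (.up ℤ) i).obj I
  have hS : IsIso (S.homologyπ i) :=
    HomologicalComplex.isIso_homologyπ _ _ i rfl (by simp [S])
  have h1 : HomologicalComplex.cyclesMap g i = 0 := by
    have := HomologicalComplex.homologyπ_naturality g i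
    rw [h0, comp_zero] at this
    rw [← cancel_mono (S.homologyπ i), ← this, zero_comp]
  have h2 : K.iCycles i ≫ g.f i = 0 := by
    rw [← HomologicalComplex.cyclesMap_i, h1, zero_comp]
  let T := ShortComplex.mk (K.iCycles i) (K.d i (i+1)) (K.iCycles_d _ _)
  have hT : T.Exact := ShortComplex.exact_of_f_is_kernel _ (K.cyclesIsKernel i (i+1) (by simp))
  let ψ := hT.descToInjective (g.f i ≫ (HomologicalComplex.singleObjXSelf (.up ℤ) i I).hom)
    (by rw [← assoc]; erw [h2]; simp)
  have hψ : K.d i (i+1) ≫ ψ = g.f i ≫ (HomologicalComplex.singleObjXSelf (.up ℤ) i I).hom :=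
    hT.comp_descToInjective _ _
  have H : Homotopy g 0 :=
    { hom := fun a b => if h : a = i + 1 ∧ b = i then
        eqToHom (by rw [h.1]) ≫ ψ ≫ (HomologicalComplex.singleObjXSelf (.up ℤ) i I).inv ≫
          eqToHom (by rw [h.2]) else 0
      zero := by
        intro a b hab
        rw [dif_neg]
        rintro ⟨rfl, rfl⟩
        exact hab (by simp)
      comm := by
        intro j
        by_cases h : j = i
        · subst h
          rw [dNext_eq _ (show (ComplexShape.up ℤ).Rel j (j+1) by simp),
            prevD_eq _ (show (ComplexShape.up ℤ).Rel (j-1) j by simp)]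
          simp only [and_self, dite_true, eqToHom_refl, id_comp, comp_id]
          rw [← assoc, hψ]
          simp
        · exact (HomologicalComplex.isZero_single_obj_X (.up ℤ) i I j h).eq_of_tgt _ _ }
  have := Q_map_eq_of_homotopy C H
  rw [Functor.map_zero, hg] at this
  rw [← cancel_epi e.hom, ← cancel_mono (singleQ I i).hom, this, comp_zero, zero_comp]

lemma inj_full (X : DerivedCategory C) (I : C) [Injective I] (i : ℤ)
    (φ : (homologyFunctor C i).obj X ⟶ I) [Mono φ] :
    ∃ f : X ⟶ (singleFunctor C i).obj I, Mono ((homologyFunctor C i).map f) := by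
  let K := Q.objPreimage X
  let e := (Q.objObjPreimageIso X)
  let φ' : K.homology i ⟶ I :=
    (homQ K i).inv ≫ (homologyFunctor C i).map e.hom ≫ φ
  have : Mono φ' := by exact mono_comp _ _
  let α : K.opcycles i ⟶ I := Injective.factorThru φ' (K.homologyι i)
  have hα : K.homologyι i ≫ α = φ' := Injective.comp_factorThru _ _
  let S := (HomologicalComplex.single C (.up ℤ) i).obj I
  let g : K ⟶ S := HomologicalComplex.mkHomToSingle (K.pOpcycles i ≫ α) (by simp)
  have hS : IsIso (S.pOpcycles i) :=
    HomologicalComplex.isIso_pOpcycles _ _ i rfl (by simp [S])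
  have hg : HomologicalComplex.opcyclesMap g i =
      α ≫ (HomologicalComplex.singleObjXSelf (.up ℤ) i I).inv ≫ S.pOpcycles i := by
    rw [← cancel_epi (K.pOpcycles i)]
    simp [g, HomologicalComplex.mkHomToSingle_f]
  have h1 : Mono (HomologicalComplex.homologyMap g i) := by
    have : Mono (HomologicalComplex.homologyMap g i ≫ S.homologyι i) := by
      rw [HomologicalComplex.homologyι_naturality, hg, ← assoc, hα]; infer_instance
    exact mono_of_mono _ (S.homologyι i)
  have h2 := homologyFunctor_map_Q_mono g i h1
  refine ⟨e.inv ≫ Q.map g ≫ (singleQ I i).inv, ?_⟩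
  rw [Functor.map_comp, Functor.map_comp]; exact mono_comp _ _

end General
end PaperProof

namespace PaperProof
open DerivedCategory
set_option linter.unusedSectionVars false
section Fam
variable {C : Type u} [Category.{v} C] [Abelian C] {ι : Type t}

/-- A family of complexes as a complex of families. -/
@[simps] noncomputable def fam (K : ι → CochainComplex C ℤ) : CochainComplex (Discrete ι ⥤ C) ℤ where
  X n := Discrete.functor (fun k => (K k).X n)
  d m n := Discrete.natTrans (fun k => (K k.as).d m n)
  shape m n h := by ext k; exact (K k.as).shape m n h
  d_comp_d' a b c _ _ := by ext k; exact (K k.as).d_comp_d a b c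

/-- A family of chain maps as a chain map. -/
@[simps] noncomputable def famMap {K L : ι → CochainComplex C ℤ} (f : ∀ k, K k ⟶ L k) :
    fam K ⟶ fam L where
  f n := Discrete.natTrans (fun k => (f k.as).f n)
  comm' m n _ := by ext k; exact (f k.as).comm m n

instance (k : ι) : ((evaluation (Discrete ι) C).obj ⟨k⟩).PreservesHomology :=
  Functor.preservesHomologyOfExact _

lemma isIso_of_square {X Y X' Y' : C} (a : X ⟶ Y) (b : Y ≅ Y') (c : X ≅ X') (d : X' ⟶ Y')
    (h : a ≫ b.hom = c.hom ≫ d) (_ : IsIso a) : IsIso d := by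
  have : d = c.inv ≫ a ≫ b.hom := by rw [h, Iso.inv_hom_id_assoc]
  rw [this]; infer_instance

lemma fam_quasiIso {K L : ι → CochainComplex C ℤ} (f : ∀ k, K k ⟶ L k) (hf : ∀ k, QuasiIso (f k)) :
    QuasiIso (famMap f) where
  quasiIsoAt i := by
    rw [quasiIsoAt_iff_isIso_homologyMap, NatTrans.isIso_iff_isIso_app]
    rintro ⟨k⟩
    have h1 : IsIso (HomologicalComplex.homologyMap (f k) i) := by
      rw [← quasiIsoAt_iff_isIso_homologyMap]; exact (hf k).quasiIsoAt i
    let E := (evaluation (Discrete ι) C).obj ⟨k⟩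
    have h2 := ShortComplex.mapHomologyIso_hom_naturality (F := E)
      ((HomologicalComplex.shortComplexFunctor _ _ i).map (famMap f))
    have h3 : IsIso (ShortComplex.homologyMap
      (E.mapShortComplex.map ((HomologicalComplex.shortComplexFunctor _ _ i).map (famMap f)))) := h1
    exact isIso_of_square _ (ShortComplex.mapHomologyIso _ E) (ShortComplex.mapHomologyIso _ E)
      _ h2 h3

lemma fam_exactAt (K : ι → CochainComplex C ℤ) (i : ℤ) (hK : ∀ k, (K k).ExactAt i) :
    (fam K).ExactAt i := by
  rw [HomologicalComplex.exactAt_iff_isZero_homology]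
  rw [Functor.isZero_iff]
  rintro ⟨k⟩
  have := hK k
  rw [HomologicalComplex.exactAt_iff_isZero_homology] at this
  exact IsZero.of_iso this (ShortComplex.mapHomologyIso ((fam K).sc i) ((evaluation (Discrete ι) C).obj ⟨k⟩)).symm

section Colim
variable [HasColimitsOfShape (Discrete ι) C] [HasExactColimitsOfShape (Discrete ι) C]

instance : (colim (J := Discrete ι) (C := C)).Additive :=
  Functor.additive_of_preserves_binary_products _
noncomputable instance : (colim (J := Discrete ι) (C := C)).PreservesHomology :=
  Functor.preservesHomologyOfExact _

/-- The coproduct complex. -/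
noncomputable def famCoprod (K : ι → CochainComplex C ℤ) : CochainComplex C ℤ :=
  ((colim (J := Discrete ι) (C := C)).mapHomologicalComplex _).obj (fam K)

/-- The inclusions into the coproduct complex. -/
noncomputable def famIn (K : ι → CochainComplex C ℤ) (k : ι) : K k ⟶ famCoprod K where
  f n := colimit.ι (Discrete.functor (fun k => (K k).X n)) ⟨k⟩
  comm' m n _ := by
    simp only [famCoprod, Functor.mapHomologicalComplex_obj_d]
    exact (ι_colimMap (α := (fam K).d m n) ⟨k⟩)

/-- The induced map between coproduct complexes. -/
noncomputable def famCoprodMap {K L : ι → CochainComplex C ℤ} (f : ∀ k, K k ⟶ L k) :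
    famCoprod K ⟶ famCoprod L :=
  ((colim (J := Discrete ι) (C := C)).mapHomologicalComplex _).map (famMap f)

lemma famIn_map {K L : ι → CochainComplex C ℤ} (f : ∀ k, K k ⟶ L k) (k : ι) :
    famIn K k ≫ famCoprodMap f = f k ≫ famIn L k := by
  ext n
  exact (ι_colimMap (α := (famMap f).f n) ⟨k⟩)

/-- The map out of a coproduct complex, degreewise. -/
noncomputable def famDescF {K : ι → CochainComplex C ℤ} {L : CochainComplex C ℤ} (f : ∀ k, K k ⟶ L)
    (n : ℤ) : (famCoprod K).X n ⟶ L.X n :=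
  colimit.desc (Discrete.functor (fun k => (K k).X n)) (Cofan.mk _ (fun k => (f k).f n))

lemma famIn_descF {K : ι → CochainComplex C ℤ} {L : CochainComplex C ℤ} (f : ∀ k, K k ⟶ L)
    (n : ℤ) (k : ι) : (famIn K k).f n ≫ famDescF f n = (f k).f n :=
  colimit.ι_desc (F := (Discrete.functor (fun k => (K k).X n)))
          (Cofan.mk _ (fun k => (f k).f n)) ⟨k⟩

lemma famIn_ext {K : ι → CochainComplex C ℤ} (n : ℤ) {Z : C} (f g : (famCoprod K).X n ⟶ Z)
    (h : ∀ k, (famIn K k).f n ≫ f = (famIn K k).f n ≫ g) : f = g :=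
  colimit.hom_ext (F := (Discrete.functor (fun k => (K k).X n))) (by rintro ⟨k⟩; exact h k)

/-- The map out of a coproduct complex. -/
noncomputable def famDesc {K : ι → CochainComplex C ℤ} {L : CochainComplex C ℤ} (f : ∀ k, K k ⟶ L) :
    famCoprod K ⟶ L where
  f n := famDescF f n
  comm' m n _ := by
    refine famIn_ext m _ _ fun k => ?_
    rw [HomologicalComplex.Hom.comm_assoc, famIn_descF, ← assoc, famIn_descF,
      HomologicalComplex.Hom.comm]

lemma famIn_desc {K : ι → CochainComplex C ℤ} {L : CochainComplex C ℤ} (f : ∀ k, K k ⟶ L) (k : ι) :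
    famIn K k ≫ famDesc f = f k := by
  ext n
  exact colimit.ι_desc (F := (Discrete.functor (fun k => (K k).X n)))
          (Cofan.mk _ (fun k => (f k).f n)) ⟨k⟩

lemma famCoprod_exactAt (K : ι → CochainComplex C ℤ) (i : ℤ) (hK : ∀ k, (K k).ExactAt i) :
    (famCoprod K).ExactAt i :=
  ShortComplex.Exact.map (fam_exactAt K i hK) colim

lemma weak_coprod [HasDerivedCategory.{w} C] (K : ι → CochainComplex C ℤ) (Y : DerivedCategory C)
    (f : ∀ k, Q.obj (K k) ⟶ Y) : ∃ g : Q.obj (famCoprod K) ⟶ Y, ∀ k, Q.map (famIn K k) ≫ g = f k := by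
  let e := Q.objObjPreimageIso Y
  choose K' s hs g hg using fun k => right_fac (f k ≫ e.inv)
  have : ∀ k, QuasiIso (s k) := fun k => by
    rw [← isIso_Q_map_iff_quasiIso]; exact hs k
  have := fam_quasiIso s this
  have hq : QuasiIso (famCoprodMap s) := by
    exact HomologicalComplex.quasiIso_map_of_preservesHomology (famMap s) _
  refine ⟨inv (Q.map (famCoprodMap s)) ≫ Q.map (famDesc g) ≫ e.hom, fun k => ?_⟩
  have h1 : Q.map (famIn K k) ≫ inv (Q.map (famCoprodMap s)) =
      inv (Q.map (s k)) ≫ Q.map (famIn K' k) := by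
    rw [IsIso.comp_inv_eq, assoc, IsIso.eq_inv_comp, ← Functor.map_comp, ← Functor.map_comp,
      famIn_map]
  rw [reassoc_of% h1, ← Functor.map_comp_assoc, famIn_desc, ← assoc, ← hg k]
  simp

end Colim

section Lim
variable [HasLimitsOfShape (Discrete ι) C] [HasExactLimitsOfShape (Discrete ι) C]

instance : (lim (J := Discrete ι) (C := C)).Additive :=
  Functor.additive_of_preserves_binary_products _
noncomputable instance : (lim (J := Discrete ι) (C := C)).PreservesHomology :=
  Functor.preservesHomologyOfExact _

/-- The product complex. -/
noncomputable def famProd (K : ι → CochainComplex C ℤ) : CochainComplex C ℤ :=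
  ((lim (J := Discrete ι) (C := C)).mapHomologicalComplex _).obj (fam K)

/-- The projections from the product complex. -/
noncomputable def famPr (K : ι → CochainComplex C ℤ) (k : ι) : famProd K ⟶ K k where
  f n := limit.π (Discrete.functor (fun k => (K k).X n)) ⟨k⟩
  comm' m n _ := by
    simp only [famProd, Functor.mapHomologicalComplex_obj_d]
    exact (limMap_π (α := (fam K).d m n) ⟨k⟩).symm

/-- The induced map between product complexes. -/
noncomputable def famProdMap {K L : ι → CochainComplex C ℤ} (f : ∀ k, K k ⟶ L k) :
    famProd K ⟶ famProd L :=
  ((lim (J := Discrete ι) (C := C)).mapHomologicalComplex _).map (famMap f)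

lemma famMap_pr {K L : ι → CochainComplex C ℤ} (f : ∀ k, K k ⟶ L k) (k : ι) :
    famProdMap f ≫ famPr L k = famPr K k ≫ f k := by
  ext n
  exact (limMap_π (α := (famMap f).f n) ⟨k⟩)

/-- The map into a product complex, degreewise. -/
noncomputable def famLiftF {K : ι → CochainComplex C ℤ} {L : CochainComplex C ℤ} (f : ∀ k, L ⟶ K k)
    (n : ℤ) : L.X n ⟶ (famProd K).X n :=
  limit.lift (Discrete.functor (fun k => (K k).X n)) (Fan.mk _ (fun k => (f k).f n))

lemma famLiftF_pr {K : ι → CochainComplex C ℤ} {L : CochainComplex C ℤ} (f : ∀ k, L ⟶ K k)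
    (n : ℤ) (k : ι) : famLiftF f n ≫ (famPr K k).f n = (f k).f n :=
  limit.lift_π (F := (Discrete.functor (fun k => (K k).X n)))
          (Fan.mk _ (fun k => (f k).f n)) ⟨k⟩

lemma famPr_ext {K : ι → CochainComplex C ℤ} (n : ℤ) {Z : C} (f g : Z ⟶ (famProd K).X n)
    (h : ∀ k, f ≫ (famPr K k).f n = g ≫ (famPr K k).f n) : f = g :=
  limit.hom_ext (F := (Discrete.functor (fun k => (K k).X n))) (by rintro ⟨k⟩; exact h k)

/-- The map into a product complex. -/
noncomputable def famLift {K : ι → CochainComplex C ℤ} {L : CochainComplex C ℤ} (f : ∀ k, L ⟶ K k) :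
    L ⟶ famProd K where
  f n := famLiftF f n
  comm' m n _ := by
    refine famPr_ext n _ _ fun k => ?_
    rw [assoc, assoc, famLiftF_pr, ← HomologicalComplex.Hom.comm, ← assoc, famLiftF_pr,
      HomologicalComplex.Hom.comm]

lemma famLift_pr {K : ι → CochainComplex C ℤ} {L : CochainComplex C ℤ} (f : ∀ k, L ⟶ K k) (k : ι) :
    famLift f ≫ famPr K k = f k := by
  ext n
  exact limit.lift_π (F := (Discrete.functor (fun k => (K k).X n)))
          (Fan.mk _ (fun k => (f k).f n)) ⟨k⟩

lemma weak_prod [HasDerivedCategory.{w} C] (K : ι → CochainComplex C ℤ) (Y : DerivedCategory C)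
    (f : ∀ k, Y ⟶ Q.obj (K k)) : ∃ g : Y ⟶ Q.obj (famProd K), ∀ k, g ≫ Q.map (famPr K k) = f k := by
  let e := Q.objObjPreimageIso Y
  choose K' g s hs hg using fun k => left_fac (e.hom ≫ f k)
  have : ∀ k, QuasiIso (s k) := fun k => by
    rw [← isIso_Q_map_iff_quasiIso]; exact hs k
  have := fam_quasiIso s this
  have hq : QuasiIso (famProdMap s) := by
    exact HomologicalComplex.quasiIso_map_of_preservesHomology (famMap s) _
  refine ⟨e.inv ≫ Q.map (famLift g) ≫ inv (Q.map (famProdMap s)), fun k => ?_⟩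
  have h1 : inv (Q.map (famProdMap s)) ≫ Q.map (famPr K k) =
      Q.map (famPr K' k) ≫ inv (Q.map (s k)) := by
    rw [IsIso.inv_comp_eq, ← assoc, IsIso.eq_comp_inv, ← Functor.map_comp, ← Functor.map_comp,
      famMap_pr]
  rw [assoc, assoc, h1, ← Functor.map_comp_assoc, famLift_pr, ← hg k]
  simp

end Lim
end Fam
end PaperProof

namespace PaperProof
open DerivedCategory
set_option linter.unusedSectionVars false
section General
variable {C : Type u} [Category.{v} C] [Abelian C] [HasDerivedCategory.{w} C] {ι : Type t}

lemma singleQ_naturality {A B : C} (f : A ⟶ B) (i : ℤ) :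
    (singleFunctor C i).map f ≫ (singleQ B i).hom =
      (singleQ A i).hom ≫ Q.map ((HomologicalComplex.single C (.up ℤ) i).map f) :=
  (singleFunctorIsoCompQ C i).hom.naturality f

section
variable [HasLimitsOfShape (Discrete ι) C] [HasExactLimitsOfShape (Discrete ι) C]

lemma single_weak_prod (M : ι → C) (Z : DerivedCategory C)
    (f : ∀ k, Z ⟶ (singleFunctor C 0).obj (M k)) :
    ∃ g : Z ⟶ (singleFunctor C 0).obj (∏ᶜ M), ∀ k, g ≫ (singleFunctor C 0).map (Pi.π M k) = f k := by
  let K : ι → CochainComplex C ℤ := fun k => (HomologicalComplex.single C (.up ℤ) 0).obj (M k)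
  obtain ⟨g, hg⟩ := weak_prod K Z (fun k => f k ≫ (singleQ (M k) 0).hom)
  let t : famProd K ⟶ (HomologicalComplex.single C (.up ℤ) 0).obj (∏ᶜ M) :=
    HomologicalComplex.mkHomToSingle
      (Pi.lift (fun k => (famPr K k).f 0 ≫ (HomologicalComplex.singleObjXSelf (.up ℤ) 0 (M k)).hom))
      (by
        intro i _
        refine Pi.hom_ext _ _ fun k => ?_
        have := (famPr K k).comm i 0
        simp only [assoc, limit.lift_π, Fan.mk_π_app, zero_comp]
        rw [← assoc, ← this]
        simp [K])
  have ht : ∀ k, t ≫ (HomologicalComplex.single C (.up ℤ) 0).map (Pi.π M k) = famPr K k := by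
    intro k
    apply HomologicalComplex.to_single_hom_ext
    simp [t, HomologicalComplex.mkHomToSingle_f, K, HomologicalComplex.single_map_f_self]
  refine ⟨g ≫ Q.map t ≫ (singleQ _ 0).inv, fun k => ?_⟩
  rw [← cancel_mono (singleQ (M k) 0).hom, ← hg k, assoc, assoc, assoc, singleQ_naturality,
    Iso.inv_hom_id_assoc, ← Functor.map_comp, ht]

lemma single_prod_faithful (M : ι → C) (X : DerivedCategory C)
    (h : X ⟶ (singleFunctor C 0).obj (∏ᶜ M))
    (hh : ∀ k, h ≫ (singleFunctor C 0).map (Pi.π M k) = 0) : h = 0 := by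
  obtain ⟨Z, p, d, hT⟩ := distinguished_cocone_triangle h
  have hp : ∀ k, ∃ q : Z ⟶ (singleFunctor C 0).obj (M k),
      (singleFunctor C 0).map (Pi.π M k) = p ≫ q := fun k =>
    Triangle.yoneda_exact₂ _ hT _ (hh k)
  choose q hq using hp
  obtain ⟨g, hg⟩ := single_weak_prod M Z q
  obtain ⟨e, he⟩ := (singleFunctor C 0).map_surjective (p ≫ g)
  have he1 : e = 𝟙 _ := by
    refine Pi.hom_ext _ _ fun k => (singleFunctor C 0).map_injective ?_
    rw [Functor.map_comp, he, assoc, hg, ← hq, id_comp]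
  have h1 : p ≫ g = 𝟙 _ := by rw [← he, he1, CategoryTheory.Functor.map_id]
  have h2 : h ≫ p = 0 := comp_distTriang_mor_zero₁₂ _ hT
  rw [← comp_id h, ← h1, reassoc_of% h2, zero_comp]

end

/-- The complex with zero differential. -/
@[simps] def zeroD (a : ℤ → C) : CochainComplex C ℤ where
  X := a
  d _ _ := 0

/-- The inclusion of the `k`th term of a complex with zero differential. -/
noncomputable def zin (A : CochainComplex C ℤ) (hA : ∀ m n, A.d m n = 0) (k : ℤ) :
    (HomologicalComplex.single C (.up ℤ) k).obj (A.X k) ⟶ A :=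
  HomologicalComplex.mkHomFromSingle (𝟙 (A.X k)) (by simp [hA])

variable (A : CochainComplex C ℤ) (hA : ∀ m n, A.d m n = 0)

lemma zin_f (k : ℤ) :
    (zin A hA k).f k = (HomologicalComplex.singleObjXSelf (.up ℤ) k (A.X k)).hom := by
  simp [zin, HomologicalComplex.mkHomFromSingle_f]

lemma zin_epi (k : ℤ) : Epi ((homologyFunctor C k).map (Q.map (zin A hA k))) := by
  apply homologyFunctor_map_Q_epi
  have i1 : IsIso (((HomologicalComplex.single C (.up ℤ) k).obj (A.X k)).iCycles k) :=
    HomologicalComplex.isIso_iCycles _ k _ rfl (by simp)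
  have i2 : IsIso (A.iCycles k) :=
    HomologicalComplex.isIso_iCycles _ k _ rfl (by simp [hA])
  have hc : HomologicalComplex.cyclesMap (zin A hA k) k =
      HomologicalComplex.iCycles _ k ≫ (HomologicalComplex.singleObjXSelf (.up ℤ) k _).hom ≫
        inv (A.iCycles k) := by
    rw [← cancel_mono (A.iCycles k)]
    simp [zin_f]
  have : Epi (HomologicalComplex.cyclesMap (zin A hA k) k) := by rw [hc]; infer_instance
  have : Epi (HomologicalComplex.homologyπ _ k ≫ HomologicalComplex.homologyMap (zin A hA k) k) := by
    rw [HomologicalComplex.homologyπ_naturality]; infer_instance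
  exact epi_of_epi (HomologicalComplex.homologyπ _ k) _

lemma zin_isIso (e : Q.obj A ⟶ Q.obj A)
    (he : ∀ k, Q.map (zin A hA k) ≫ e = Q.map (zin A hA k)) : IsIso e := by
  rw [isIso_iff]
  intro k
  have := zin_epi A hA k
  have h : (homologyFunctor C k).map e = 𝟙 _ := by
    rw [← cancel_epi ((homologyFunctor C k).map (Q.map (zin A hA k))), ← Functor.map_comp, he,
      comp_id]
  rw [h]; infer_instance

lemma zin_weak [HasColimitsOfShape (Discrete ℤ) C] [HasExactColimitsOfShape (Discrete ℤ) C]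
    (Y : DerivedCategory C)
    (f : ∀ k, Q.obj ((HomologicalComplex.single C (.up ℤ) k).obj (A.X k)) ⟶ Y) :
    ∃ g : Q.obj A ⟶ Y, ∀ k, Q.map (zin A hA k) ≫ g = f k := by
  let K : ℤ → CochainComplex C ℤ := fun k => (HomologicalComplex.single C (.up ℤ) k).obj (A.X k)
  obtain ⟨g, hg⟩ := weak_coprod K Y f
  let s : A ⟶ famCoprod K :=
    { f := fun n => (HomologicalComplex.singleObjXSelf (.up ℤ) n (A.X n)).inv ≫ (famIn K n).f n
      comm' := by
        intro m n _
        have := (famIn K m).comm m n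
        rw [assoc, this]
        simp [K, hA] }
  have hs : ∀ k, zin A hA k ≫ s = famIn K k := by
    intro k
    apply HomologicalComplex.from_single_hom_ext
    simp [s, zin_f, K]
  exact ⟨Q.map s ≫ g, fun k => by rw [← Functor.map_comp_assoc, hs, hg]⟩

lemma triangle_replace {D : Type u₂} [Category.{v₂} D] [HasZeroObject D] [Preadditive D]
    [HasShift D ℤ] [∀ n : ℤ, (shiftFunctor D n).Additive] [Pretriangulated D]
    {X Y Y' Z : D} (f : X ⟶ Y) (g : Y ⟶ Z) (h : Z ⟶ X⟦(1 : ℤ)⟧)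
    (hT : Triangle.mk f g h ∈ distTriang D) (e : Y' ≅ Y) :
    Triangle.mk (f ≫ e.inv) (e.hom ≫ g) h ∈ distTriang D := by
  refine isomorphic_distinguished _ hT _ ?_
  exact Triangle.isoMk _ _ (Iso.refl _) e (Iso.refl _)
    (by change (f ≫ e.inv) ≫ e.hom = 𝟙 X ≫ f; simp)
    (by change (e.hom ≫ g) ≫ 𝟙 Z = e.hom ≫ g; simp)
    (by change h ≫ (shiftFunctor D (1 : ℤ)).map (𝟙 X) = 𝟙 Z ≫ h; simp)

lemma ses_triangle {S : ShortComplex (CochainComplex C ℤ)} (hS : S.ShortExact)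
    {Z : DerivedCategory C} (e : Z ≅ Q.obj S.X₂) :
    Triangle.mk (Q.map S.f ≫ e.inv) (e.hom ≫ Q.map S.g) (triangleOfSESδ hS) ∈
      distTriang (DerivedCategory C) :=
  triangle_replace (Q.map S.f) (Q.map S.g) (triangleOfSESδ hS) (triangleOfSES_distinguished hS) e

lemma cycles_triangle (Z : DerivedCategory C) (m : ℤ) (hZ : Z.IsLE m) :
    ∃ (A B : CochainComplex C ℤ) (f : Q.obj A ⟶ Z) (g : Z ⟶ Q.obj B)
      (h : Q.obj B ⟶ (Q.obj A)⟦(1 : ℤ)⟧),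
      (Triangle.mk f g h ∈ distTriang (DerivedCategory C)) ∧
      (∀ m n, A.d m n = 0) ∧ (∀ m n, B.d m n = 0) ∧
      ∀ n, m < n → IsZero (A.X n) ∧ IsZero (B.X n) := by
  obtain ⟨K, hK, ⟨e⟩⟩ := exists_iso_Q_obj_of_isLE Z m
  let a : ℤ → C := fun n => K.cycles n
  let b : ℤ → C := fun n => cokernel (K.iCycles n)
  let i : zeroD a ⟶ K := 
    { f := fun n => K.iCycles n
      comm' := by
        intro r s _
        change K.iCycles r ≫ K.d r s = (0 : K.cycles r ⟶ K.cycles s) ≫ K.iCycles s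
        simp }
  let p : K ⟶ zeroD b :=
    { f := fun n => cokernel.π (K.iCycles n)
      comm' := by
        intro r s _
        change cokernel.π (K.iCycles r) ≫ (0 : cokernel (K.iCycles r) ⟶ cokernel (K.iCycles s)) =
          K.d r s ≫ cokernel.π (K.iCycles s)
        rw [← K.toCycles_i r s, assoc, cokernel.condition]
        simp }
  let S : ShortComplex (CochainComplex C ℤ) := ShortComplex.mk i p (by ext n; exact cokernel.condition (K.iCycles n))
  have hS : S.ShortExact := by
    apply HomologicalComplex.shortExact_of_degreewise_shortExact
    intro n
    have h1 : Mono (S.map (HomologicalComplex.eval C (.up ℤ) n)).f := by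
      change Mono (K.iCycles n); infer_instance
    have h2 : Epi (S.map (HomologicalComplex.eval C (.up ℤ) n)).g := by
      change Epi (cokernel.π (K.iCycles n)); infer_instance
    exact ⟨ShortComplex.exact_of_g_is_cokernel _ (cokernelIsCokernel (K.iCycles n))⟩
  refine ⟨zeroD a, zeroD b, Q.map i ≫ e.inv, e.hom ≫ Q.map p, triangleOfSESδ hS, ?_, fun _ _ => rfl, fun _ _ => rfl, ?_⟩
  · exact ses_triangle hS e
  · intro n hn
    have h0 : IsZero (K.X n) := CochainComplex.isZero_of_isStrictlyLE K m n hn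
    have h1 : IsZero (K.cycles n) := h0.of_mono (K.iCycles n)
    have h2 : IsZero (cokernel (K.iCycles n)) := h0.of_epi (cokernel.π (K.iCycles n))
    exact ⟨h1, h2⟩

end General
end PaperProof

namespace PaperProof
open DerivedCategory
set_option linter.unusedSectionVars false
section Equiv
variable {G : Type u} [Category.{v} G] [Abelian G] [HasDerivedCategory.{w} G]
  {B : Type u₂} [Category.{v₂} B] [Abelian B] [HasDerivedCategory.{w₂} B]

lemma le_ge_zero {X Y : DerivedCategory G} (f : X ⟶ Y) (a b : ℤ) (hab : a < b) (hX : X.IsLE a)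
    (hY : Y.IsGE b) : f = 0 :=
  TStructure.t.zero_of_isLE_of_isGE f a b hab hX hY

lemma isZero_hom_of_iso {X Y : DerivedCategory G} (e : X ≅ Y) (i : ℤ)
    (h : IsZero ((homologyFunctor G i).obj X)) : IsZero ((homologyFunctor G i).obj Y) :=
  h.of_iso ((homologyFunctor G i).mapIso e.symm)

lemma single_ne (M : G) (i k : ℤ) (h : i ≠ k) :
    IsZero ((homologyFunctor G i).obj ((singleFunctor G k).obj M)) := by
  rcases lt_or_gt_of_ne h with h | h
  · exact isZero_of_isGE _ k i h
  · exact isZero_of_isLE _ k i h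

lemma tri_mid {X Y Z : DerivedCategory G} (f : X ⟶ Y) (g : Y ⟶ Z) (h : Z ⟶ X⟦(1 : ℤ)⟧)
    (hT : Triangle.mk f g h ∈ distTriang (DerivedCategory G)) (i : ℤ)
    (h1 : IsZero ((homologyFunctor G i).obj X)) (h3 : IsZero ((homologyFunctor G i).obj Z)) :
    IsZero ((homologyFunctor G i).obj Y) :=
  (HomologySequence.exact₂ _ hT i).isZero_of_both_zeros (h1.eq_of_src _ _) (h3.eq_of_tgt _ _)

variable (F : DerivedCategory G ⥤ DerivedCategory B) [F.IsEquivalence]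

lemma F_zero {Z X : DerivedCategory G} {X' : DerivedCategory B} (e : F.obj Z ≅ X')
    [F.PreservesZeroMorphisms]
    (h : ∀ g : Z ⟶ X, g = 0) (f : X' ⟶ F.obj X) : f = 0 := by
  have h1 := h (F.preimage (e.hom ≫ f))
  have h2 : e.hom ≫ f = 0 := by
    rw [← F.map_preimage (e.hom ≫ f), h1, F.map_zero]
  rw [← cancel_epi e.hom, h2, comp_zero]

lemma zero_of_F {Z X : DerivedCategory G} [F.PreservesZeroMorphisms]
    (f : Z ⟶ X) (h : F.map f = 0) : f = 0 :=
  F.map_injective (h.trans (F.map_zero _ _).symm)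

section
variable [HasColimitsOfShape (Discrete ℤ) G] [HasExactColimitsOfShape (Discrete ℤ) G]
  [HasColimitsOfShape (Discrete ℤ) B] [HasExactColimitsOfShape (Discrete ℤ) B]

lemma compact_vanish (A : CochainComplex G ℤ) (hA : ∀ m n, A.d m n = 0) (i : ℤ)
    (h : ∀ k, IsZero ((homologyFunctor B i).obj
      (F.obj (Q.obj ((HomologicalComplex.single G (.up ℤ) k).obj (A.X k)))))) :
    IsZero ((homologyFunctor B i).obj (F.obj (Q.obj A))) := by
  let K' : ℤ → CochainComplex B ℤ := fun k =>
    Q.objPreimage (F.obj (Q.obj ((HomologicalComplex.single G (.up ℤ) k).obj (A.X k))))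
  let ek : ∀ k, Q.obj (K' k) ≅
    (F.obj (Q.obj ((HomologicalComplex.single G (.up ℤ) k).obj (A.X k)))) := fun k =>
    Q.objObjPreimageIso _
  have hP : IsZero ((homologyFunctor B i).obj (Q.obj (famCoprod K'))) := by
    refine IsZero.of_iso ?_ (homQ _ i)
    refine (famCoprod_exactAt K' i fun k => ?_).isZero_homology
    rw [HomologicalComplex.exactAt_iff_isZero_homology]
    exact (isZero_hom_of_iso (ek k).symm i (h k)).of_iso (homQ (K' k) i).symm
  obtain ⟨b, hb⟩ := weak_coprod K' (F.obj (Q.obj A))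
    (fun k => (ek k).hom ≫ F.map (Q.map (zin A hA k)))
  obtain ⟨a, ha⟩ := zin_weak A hA (F.objPreimage (Q.obj (famCoprod K')))
    (fun k => F.preimage ((ek k).inv ≫ Q.map (famIn K' k) ≫ (F.objObjPreimageIso _).inv))
  let c := F.preimage ((F.objObjPreimageIso (Q.obj (famCoprod K'))).hom ≫ b)
  have : IsIso (a ≫ c) := by
    refine zin_isIso A hA _ fun k => ?_
    rw [← assoc, ha]
    apply F.map_injective
    rw [F.map_comp, F.map_preimage, F.map_preimage]
    simp only [assoc, Iso.inv_hom_id_assoc, hb]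
  have h0 : (homologyFunctor B i).map (F.map (a ≫ c)) = 0 := by
    rw [F.map_comp, F.map_preimage, Functor.map_comp, Functor.map_comp,
      hP.eq_of_src ((homologyFunctor B i).map b) 0]
    simp
  have h1 : IsIso ((homologyFunctor B i).map (F.map (a ≫ c))) := inferInstance
  rw [h0] at h1
  exact (IsZero.iff_id_eq_zero _).2 ((isIsoZeroEquiv _ _).1 h1).1

lemma vanish_LE [F.CommShift ℤ] [F.IsTriangulated] (Z : DerivedCategory G) (m i : ℤ) (hZ : Z.IsLE m)
    (h : ∀ k ≤ m, ∀ A : G, IsZero ((homologyFunctor B i).obj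
      (F.obj ((singleFunctor G k).obj A)))) :
    IsZero ((homologyFunctor B i).obj (F.obj Z)) := by
  obtain ⟨A, A', f, g, δ, hT, hA, hA', hz⟩ := cycles_triangle Z m hZ
  have key : ∀ A : CochainComplex G ℤ, (∀ m n, A.d m n = 0) → (∀ n, m < n → IsZero (A.X n)) →
      IsZero ((homologyFunctor B i).obj (F.obj (Q.obj A))) := by
    intro A hA hz
    refine compact_vanish F A hA i fun k => ?_
    refine isZero_hom_of_iso (F.mapIso (singleQ (A.X k) k)) i ?_
    by_cases hk : k ≤ m
    · exact h k hk _
    · exact (homologyFunctor B i).map_isZero (F.map_isZero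
        ((singleFunctor G k).map_isZero (hz k (not_le.1 hk))))
  exact tri_mid _ _ _ (F.map_distinguished _ hT) i (key A hA fun n hn => (hz n hn).1)
    (key A' hA' fun n hn => (hz n hn).2)
end

section
variable [F.CommShift ℤ]

noncomputable def F_single {T : G} {U : B}
    (e : F.obj ((singleFunctor G 0).obj T) ≅ (singleFunctor B 0).obj U) (i : ℤ) :
    F.obj ((singleFunctor G i).obj T) ≅ (singleFunctor B i).obj U :=
  F.mapIso (singleShift T (-i) i 0 (by simp)).symm ≪≫ (F.commShiftIso (-i)).app _ ≪≫
    (shiftFunctor _ (-i)).mapIso e ≪≫ singleShift U (-i) i 0 (by simp)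

lemma tilt_vanish [F.PreservesZeroMorphisms] {T : G} {U : B}
    (e : F.obj ((singleFunctor G 0).obj T) ≅ (singleFunctor B 0).obj U) (hU : IsSeparator U)
    (i : ℤ) (X : DerivedCategory G) (h : ∀ f : (singleFunctor G i).obj T ⟶ X, f = 0) :
    IsZero ((homologyFunctor B i).obj (F.obj X)) := by
  obtain ⟨A, f, hf⟩ := exists_cyc (F.obj X) i
  have h0 : (homologyFunctor B i).map f = 0 := by
    let s := singleFunctorCompHomologyFunctorIso B i
    rw [← cancel_epi (s.inv.app A), comp_zero]
    refine hU.def _ _ fun r => ?_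
    have h1 : (singleFunctor B i).map r ≫ f = 0 := F_zero F (F_single F e i) h _
    have h2 := s.inv.naturality r
    dsimp at h2
    rw [comp_zero, reassoc_of% h2, ← Functor.map_comp, h1, Functor.map_zero, comp_zero]
  exact IsZero.of_epi_eq_zero _ h0
end

lemma ext_shift [HasExt.{e} G] [EnoughInjectives G] (T : G) (n : ℕ)
    (hn : ∀ X : G, Subsingleton (Abelian.Ext.{e} T X (n + 1))) (j : ℕ) (hj : n + 1 ≤ j) :
    ∀ X : G, Subsingleton (Abelian.Ext.{e} T X j) := by
  induction j, hj using Nat.le_induction with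
  | base => exact hn
  | succ j hj ih =>
    intro X
    refine ⟨fun x y => ?_⟩
    suffices ∀ x : Abelian.Ext.{e} T X (j + 1), x = 0 by rw [this x, this y]
    intro x
    let S := ShortComplex.mk (Injective.ι X) (cokernel.π (Injective.ι X)) (cokernel.condition _)
    have hS : S.ShortExact := { exact := ShortComplex.exact_cokernel _ }
    obtain ⟨x₃, hx⟩ := Abelian.Ext.covariant_sequence_exact₁ (hS := hS) (X := T) x
      (Abelian.Ext.eq_zero_of_injective (I := Injective.under X) _) rfl
    have := ih S.X₃
    rw [← hx, Subsingleton.elim x₃ 0, Abelian.Ext.zero_comp]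

end Equiv
end PaperProof

namespace PaperProof
open DerivedCategory
set_option linter.unusedSectionVars false
section Star
variable {G : Type u} [Category.{v} G] [Abelian G] [HasDerivedCategory.{w} G]

/-- No maps from positive-degree stalk complexes. -/
def Star (Y : DerivedCategory G) : Prop :=
  ∀ (X : G) (i : ℤ) (_ : 0 < i) (f : (singleFunctor G i).obj X ⟶ Y), f = 0

lemma star_LE (Y : DerivedCategory G) (h : Star Y) : Y.IsLE 0 := by
  rw [isLE_iff]
  intro i hi
  obtain ⟨A, f, hf⟩ := exists_cyc Y i
  refine IsZero.of_epi_eq_zero ((homologyFunctor G i).map f) ?_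
  rw [h A i hi f, Functor.map_zero]

lemma to_inj_zero (X : DerivedCategory G) (I : G) [Injective I] (k : ℤ)
    (h : IsZero ((homologyFunctor G k).obj X)) (f : X ⟶ (singleFunctor G k).obj I) : f = 0 :=
  inj_faithful X I k f (h.eq_of_src _ _)

lemma fiber_star {Y' Y Z : DerivedCategory G} (f : Y' ⟶ Y) (g : Y ⟶ Z) (h : Z ⟶ Y'⟦(1 : ℤ)⟧)
    (hT : Triangle.mk f g h ∈ distTriang (DerivedCategory G))
    (hY : Star Y) (hZ : ∀ (X : G) (i : ℤ) (_ : 0 ≤ i) (p : (singleFunctor G i).obj X ⟶ Z), p ≫ h = 0) :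
    Star Y' := by
  intro X i hi p
  have h1 : p ≫ f = 0 := hY X i hi _
  have h2 : p⟦(1 : ℤ)⟧' ≫ f⟦(1 : ℤ)⟧' = 0 := by rw [← Functor.map_comp, h1, Functor.map_zero]
  obtain ⟨q, hq⟩ : ∃ q : ((singleFunctor G i).obj X)⟦(1 : ℤ)⟧ ⟶ Z, p⟦(1 : ℤ)⟧' = q ≫ h :=
    Triangle.coyoneda_exact₁ _ hT (p⟦(1 : ℤ)⟧') h2
  let e := singleShift X 1 (i - 1) i (by simp)
  have h3 : e.inv ≫ q ≫ h = 0 := by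
    rw [← assoc]; exact hZ X (i - 1) (by omega) _
  have h4 : q ≫ h = 0 := by rw [← cancel_epi e.inv, h3, comp_zero]
  exact (shiftFunctor (DerivedCategory G) (1 : ℤ)).map_injective
    ((hq.trans h4).trans (Functor.map_zero _ _ _).symm)

lemma conc_iso (Z : DerivedCategory G) (h1 : Z.IsGE 0) (h2 : Z.IsLE 0) :
    Nonempty (Z ≅ (singleFunctor G 0).obj ((homologyFunctor G 0).obj Z)) := by
  obtain ⟨D, ⟨e⟩⟩ := exists_iso_singleFunctor_obj_of_isGE_of_isLE Z 0
  exact ⟨e ≪≫ (singleFunctor G 0).mapIso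
    ((homologyFunctor G 0).mapIso e ≪≫ (singleFunctorCompHomologyFunctorIso G 0).app D).symm⟩

lemma tri_left {X Y Z : DerivedCategory G} (f : X ⟶ Y) (g : Y ⟶ Z) (h : Z ⟶ X⟦(1 : ℤ)⟧)
    (hT : Triangle.mk f g h ∈ distTriang (DerivedCategory G)) (k : ℤ)
    (h1 : IsZero ((homologyFunctor G (k - 1)).obj Z)) (h2 : (homologyFunctor G k).map f = 0) :
    IsZero ((homologyFunctor G k).obj X) :=
  (HomologySequence.exact₁ _ hT (k - 1) k (by simp)).isZero_of_both_zeros (h1.eq_of_src _ _) h2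

lemma star_inj [HasExt.{e} G] [EnoughInjectives G] (Y : DerivedCategory G) (h0 : Y.IsGE 0)
    (hY : Star Y) : ∃ (I : G) (_ : Injective I), Nonempty (Y ≅ (singleFunctor G 0).obj I) := by
  have h1 := star_LE Y hY
  obtain ⟨I, ⟨e⟩⟩ := exists_iso_singleFunctor_obj_of_isGE_of_isLE Y 0
  refine ⟨I, ?_, ⟨e⟩⟩
  rw [injective_iff_subsingleton_ext_one]
  intro X
  refine ext_bridge' X I 1 1 0 (by simp) fun f => ?_
  exact eq_zero_of_conj (Iso.refl _) e.symm f fun g => hY X 1 one_pos g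

lemma star_approx [HasExt.{e} G] [EnoughInjectives G] (m : ℕ) : ∀ (Y : DerivedCategory G)
    (_ : Y.IsGE (-m)) (_ : Star Y), ∃ (I : G) (_ : Injective I) (f : (singleFunctor G 0).obj I ⟶ Y),
      ∀ (X : G) (g : (singleFunctor G 0).obj X ⟶ Y), ∃ u, u ≫ f = g := by
  induction m with
  | zero =>
    intro Y h0 hY
    obtain ⟨I, hI, ⟨e⟩⟩ := star_inj Y (by simpa using h0) hY
    exact ⟨I, hI, e.inv, fun X g => ⟨g ≫ e.hom, by simp⟩⟩
  | succ m ih =>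
    intro Y h0 hY
    obtain ⟨J, hJ, g, hg⟩ : ∃ (J : G) (_ : Injective J)
        (g : Y ⟶ (singleFunctor G (-((m + 1 : ℕ) : ℤ))).obj J),
        Mono ((homologyFunctor G (-((m + 1 : ℕ) : ℤ))).map g) :=
      ⟨_, inferInstance, inj_full Y (Injective.under _) _ (Injective.ι _)⟩
    obtain ⟨Y', a, d, hT⟩ := distinguished_cocone_triangle₁ g
    have hag : a ≫ g = 0 := comp_distTriang_mor_zero₁₂ _ hT
    have hz : ∀ (X : G) (i : ℤ) (_ : 0 ≤ i)
        (p : (singleFunctor G i).obj X ⟶ (singleFunctor G (-((m + 1 : ℕ) : ℤ))).obj J), p = 0 :=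
      fun X i hi p => to_inj_zero _ J _ (single_ne X _ _ (by push_cast; omega)) p
    have hY' : Star Y' := fiber_star a g d hT hY fun X i hi p => by
      rw [hz X i hi p, zero_comp]
    have hge : Y'.IsGE (-m) := by
      rw [isGE_iff]
      intro k hk
      refine tri_left a g d hT k (single_ne J _ _ (by push_cast; omega)) ?_
      by_cases hk' : k = -((m + 1 : ℕ) : ℤ)
      · subst hk'
        rw [← cancel_mono ((homologyFunctor G (-((m + 1 : ℕ) : ℤ))).map g), ← Functor.map_comp, hag,
          Functor.map_zero, zero_comp]
      · exact (isZero_of_isGE Y (-((m + 1 : ℕ) : ℤ)) k (by push_cast at hk' ⊢; omega)).eq_of_tgt _ _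
    obtain ⟨I, hI, f, hf⟩ := ih Y' hge hY'
    refine ⟨I, hI, f ≫ a, fun X q => ?_⟩
    obtain ⟨q', hq'⟩ : ∃ q' : (singleFunctor G 0).obj X ⟶ Y', q = q' ≫ a :=
      Triangle.coyoneda_exact₂ _ hT q (hz X 0 le_rfl _)
    obtain ⟨u, hu⟩ := hf X q'
    exact ⟨u, by rw [hq', ← hu, assoc]⟩
end Star
end PaperProof

namespace PaperProof
open DerivedCategory
set_option linter.unusedSectionVars false

/-- `ESeq P L n K`: there is an exact sequence `0 → K → P₁ → ⋯ → Pₙ → L → 0` with `Pᵢ` in `P`. -/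
inductive ESeq {B : Type u₂} [Category.{v₂} B] [Abelian B] (P : B → Prop) (L : B) : ℕ → B → Prop
  | base (K : B) (e : Nonempty (K ≅ L)) : ESeq P L 0 K
  | step (n : ℕ) (S : ShortComplex B) (hS : S.ShortExact) (h : P S.X₂) (h' : ESeq P L n S.X₃) :
      ESeq P L (n + 1) S.X₁

section Tilt
variable {G : Type u} [Category.{v} G] [Abelian G] [HasDerivedCategory.{w} G]
  {B : Type u₂} [Category.{v₂} B] [Abelian B] [HasDerivedCategory.{w₂} B]
  (F : DerivedCategory G ⥤ DerivedCategory B) [F.IsEquivalence] [F.CommShift ℤ] [F.IsTriangulated]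

section

lemma ge_F {T : G} {U : B}
    (e : F.obj ((singleFunctor G 0).obj T) ≅ (singleFunctor B 0).obj U) (hU : IsSeparator U)
    (Z : DerivedCategory G) (k : ℤ) (hZ : Z.IsGE k) : (F.obj Z).IsGE k := by
  rw [isGE_iff]
  intro i hi
  exact tilt_vanish F e hU i Z fun f => le_ge_zero f i k hi inferInstance hZ

lemma inj_F {T : G} {U : B}
    (e : F.obj ((singleFunctor G 0).obj T) ≅ (singleFunctor B 0).obj U) (hU : IsSeparator U)
    (I : G) [Injective I] (i : ℤ) (hi : i ≠ 0) :
    IsZero ((homologyFunctor B i).obj (F.obj ((singleFunctor G 0).obj I))) :=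
  tilt_vanish F e hU i _ fun f => to_inj_zero _ I 0 (single_ne T 0 i hi.symm) f

lemma star_F {T : G} {U : B}
    (e : F.obj ((singleFunctor G 0).obj T) ≅ (singleFunctor B 0).obj U) (hU : IsSeparator U)
    (Y : DerivedCategory G) (hY : Star Y) : (F.obj Y).IsLE 0 := by
  rw [isLE_iff]
  intro i hi
  exact tilt_vanish F e hU i Y fun f => hY T i hi f

lemma star_of_inj {T : G} {U : B}
    (e : F.obj ((singleFunctor G 0).obj T) ≅ (singleFunctor B 0).obj U) (hU : IsSeparator U)
    (Y : DerivedCategory G) (L : B) [Injective L]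
    (eY : F.obj Y ≅ (singleFunctor B 0).obj L) : Star Y := by
  intro X i hi f
  apply zero_of_F F
  rw [← cancel_mono eY.hom, zero_comp]
  have := ge_F F e hU ((singleFunctor G i).obj X) i inferInstance
  exact to_inj_zero _ L 0 (isZero_of_isGE _ i 0 hi) _

section
variable [HasColimitsOfShape (Discrete ℤ) G] [HasExactColimitsOfShape (Discrete ℤ) G]
  [HasColimitsOfShape (Discrete ℤ) B] [HasExactColimitsOfShape (Discrete ℤ) B]
  [HasExt.{e} G] [EnoughInjectives G]

lemma le_F {T : G} {U : B}
    (e : F.obj ((singleFunctor G 0).obj T) ≅ (singleFunctor B 0).obj U) (hU : IsSeparator U)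
    (n : ℕ) (hn : ∀ X : G, Subsingleton (Abelian.Ext.{e} T X (n + 1)))
    (Z : DerivedCategory G) (hZ : Z.IsLE (-n - 1)) : (F.obj Z).IsLE (-1) := by
  rw [isLE_iff]
  intro i hi
  refine vanish_LE F Z (-n - 1) i hZ fun k hk A => ?_
  refine tilt_vanish F e hU i _ fun f => ?_
  obtain ⟨j, hj⟩ : ∃ j : ℕ, i = k + j := ⟨(i - k).toNat, by omega⟩
  exact ext_bridge T A j (ext_shift T n hn j (by omega) A) i k hj f

lemma ge_of_F {T : G} {U : B}
    (e : F.obj ((singleFunctor G 0).obj T) ≅ (singleFunctor B 0).obj U) (hU : IsSeparator U)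
    (n : ℕ) (hn : ∀ X : G, Subsingleton (Abelian.Ext.{e} T X (n + 1)))
    (Y : DerivedCategory G) (hY : (F.obj Y).IsGE 0) : Y.IsGE (-n) :=
  isGE_of_orth Y _ fun X hX f => zero_of_F F f
    (le_ge_zero _ (-1) 0 (by simp) (le_F F e hU n hn X hX) hY)
end

lemma resolve {T : G} {U : B}
    (e : F.obj ((singleFunctor G 0).obj T) ≅ (singleFunctor B 0).obj U) (hU : IsSeparator U)
    [HasExt.{e} G] [EnoughInjectives G] (P : B → Prop) (L : B)
    (hP : ∀ (I : G) (_ : Injective I) (D : B),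
      Nonempty (F.obj ((singleFunctor G 0).obj I) ≅ (singleFunctor B 0).obj D) → P D)
    (m : ℕ) : ∀ (Y : DerivedCategory G) (_ : Y.IsGE (-m)) (_ : Star Y) (_ : (F.obj Y).IsGE 0)
      (r : ℕ) (_ : ESeq P L r ((homologyFunctor B 0).obj (F.obj Y))),
      ∃ r K, P K ∧ ESeq P L r K := by
  induction m with
  | zero =>
    intro Y h0 hY hF r hr
    obtain ⟨I, hI, ⟨eI⟩⟩ := star_inj Y (by simpa using h0) hY
    obtain ⟨e'⟩ := conc_iso (F.obj Y) hF (star_F F e hU Y hY)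
    exact ⟨r, _, hP I hI _ ⟨F.mapIso eI.symm ≪≫ e'⟩, hr⟩
  | succ m ih =>
    intro Y h0 hY hF r hr
    obtain ⟨I, hI, f, hf⟩ := star_approx (m + 1) Y h0 hY
    obtain ⟨Y', a, d, hT⟩ := distinguished_cocone_triangle₁ f
    have hfd : f ≫ d = 0 := comp_distTriang_mor_zero₂₃ _ hT
    have hI' : Star ((singleFunctor G 0).obj I) := fun X i hi p =>
      to_inj_zero _ I 0 (single_ne X 0 i hi.ne) p
    have hY' : Star Y' := fiber_star a f d hT hI' fun X i hi p => by
      rcases hi.eq_or_lt with rfl | hi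
      · obtain ⟨u, rfl⟩ := hf X p
        rw [assoc, hfd, comp_zero]
      · rw [hY X i hi p, zero_comp]
    have hge : Y'.IsGE (-m) := by
      rw [isGE_iff]
      intro k hk
      refine tri_left a f d hT k (isZero_of_isGE Y (-((m + 1 : ℕ) : ℤ)) _ (by push_cast; omega)) ?_
      exact (single_ne I k 0 (by omega)).eq_of_tgt _ _
    have hFT := F.map_distinguished _ hT
    have hge' : (F.obj Y').IsGE 0 := by
      rw [isGE_iff]
      intro k hk
      refine tri_left _ _ _ hFT k (isZero_of_isGE (F.obj Y) 0 _ (by omega)) ?_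
      exact (inj_F F e hU I k (by omega)).eq_of_tgt _ _
    have hle' := star_F F e hU Y' hY'
    let S : ShortComplex B := ShortComplex.mk ((homologyFunctor B 0).map (F.map a))
      ((homologyFunctor B 0).map (F.map f)) (by
        rw [← Functor.map_comp, ← F.map_comp, show a ≫ f = 0 from comp_distTriang_mor_zero₁₂ _ hT,
          F.map_zero, Functor.map_zero])
    have hS : S.ShortExact :=
      { exact := HomologySequence.exact₂ _ hFT 0
        mono_f := (HomologySequence.mono_homologyMap_mor₁_iff _ hFT (-1) 0).2
          ((isZero_of_isGE (F.obj Y) 0 (-1) (by simp)).eq_of_src _ _)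
        epi_g := (HomologySequence.epi_homologyMap_mor₂_iff _ hFT 0 1).2
          ((isZero_of_isLE (F.obj Y') 0 1 (by simp)).eq_of_tgt _ _) }
    have hFI : (F.obj ((singleFunctor G 0).obj I)).IsGE 0 := ge_F F e hU _ 0 inferInstance
    exact ih Y' hge hY' hge' (r + 1)
      (ESeq.step r S hS (hP I hI _ (conc_iso _ hFI (star_F F e hU _ hI'))) hr)

end

section

lemma ext_vanish {W : G} {C : B}
    (eW : F.obj ((singleFunctor G 0).obj W) ≅ (singleFunctor B 0).obj C)
    [Injective W] [HasExt.{e} B] (M : B) (Y : DerivedCategory G)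
    (eY : F.obj Y ≅ (singleFunctor B 0).obj M)
    (j : ℕ) (h : IsZero ((homologyFunctor G (-j)).obj Y)) :
    Subsingleton (Abelian.Ext.{e} M C j) := by
  refine ext_bridge' M C j 0 (-j) (by simp) fun f => ?_
  refine eq_zero_of_conj eY.symm (F_single F eW (-j)).symm f fun g => ?_
  exact F_zero F (Iso.refl _) (fun p => to_inj_zero Y W (-j) h p) g

lemma prod_GE {W : G} {C : B}
    (eW : F.obj ((singleFunctor G 0).obj W) ≅ (singleFunctor B 0).obj C)
    [Injective W] {ι : Type t} [HasLimitsOfShape (Discrete ι) B]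
    [HasExactLimitsOfShape (Discrete ι) B]
    (Y : DerivedCategory G) (eY : F.obj Y ≅ (singleFunctor B 0).obj (∏ᶜ fun _ : ι => C)) :
    Y.IsGE 0 := by
  refine isGE_of_orth Y 0 fun X hX f => zero_of_F F f ?_
  rw [← cancel_mono eY.hom, zero_comp]
  refine single_prod_faithful _ _ _ fun k => ?_
  refine eq_zero_of_conj (Iso.refl _) eW.symm _ fun g => ?_
  exact F_zero F (Iso.refl _) (fun p => le_ge_zero p (0 - 1) 0 (by simp) hX inferInstance) g

lemma inj_summand {W : G} {C : B}
    (eW : F.obj ((singleFunctor G 0).obj W) ≅ (singleFunctor B 0).obj C)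
    (hW : IsCoseparator W) (I : G) [Injective I] (D : B)
    (eD : F.obj ((singleFunctor G 0).obj I) ≅ (singleFunctor B 0).obj D)
    [HasProduct (fun _ : D ⟶ C => C)] :
    ∃ r : (∏ᶜ (fun _ : D ⟶ C => C)) ⟶ D, Pi.lift (fun w : D ⟶ C => w) ≫ r = 𝟙 D := by
  obtain ⟨N, δ, h, hT⟩ := distinguished_cocone_triangle₁
    ((singleFunctor B 0).map (Pi.lift (fun w : D ⟶ C => w)))
  have h0 : δ ≫ (singleFunctor B 0).map (Pi.lift (fun w : D ⟶ C => w)) = 0 :=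
    comp_distTriang_mor_zero₁₂ _ hT
  have h1 : ∀ w : D ⟶ C, δ ≫ (singleFunctor B 0).map w = 0 := fun w => by
    have : (singleFunctor B 0).map (Pi.lift (fun w : D ⟶ C => w)) ≫
        (singleFunctor B 0).map (Pi.π _ w) = (singleFunctor B 0).map w := by
      rw [← Functor.map_comp, Pi.lift_π]
    rw [← this, reassoc_of% h0, zero_comp]
  let eN := F.objObjPreimageIso N
  let δ' : F.objPreimage N ⟶ (singleFunctor G 0).obj I := F.preimage (eN.hom ≫ δ ≫ eD.inv)
  have h2 : ∀ w' : I ⟶ W, δ' ≫ (singleFunctor G 0).map w' = 0 := fun w' => by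
    apply zero_of_F F
    have h3 := h1 ((singleFunctor B 0).preimage (eD.inv ≫ F.map ((singleFunctor G 0).map w') ≫ eW.hom))
    rw [Functor.map_preimage] at h3
    rw [F.map_comp, F.map_preimage, ← cancel_mono eW.hom, zero_comp, assoc, assoc, assoc, h3,
      comp_zero]
  have h3 : δ' = 0 := by
    refine inj_faithful _ I 0 δ' ?_
    let s := singleFunctorCompHomologyFunctorIso G 0
    rw [← cancel_mono (s.hom.app I), zero_comp]
    refine hW.def _ _ fun w' => ?_
    have h4 := s.hom.naturality w'
    dsimp at h4
    rw [zero_comp, assoc, ← h4, ← Functor.map_comp_assoc, h2, Functor.map_zero, zero_comp]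
  have h4 : δ = 0 := by
    have : eN.hom ≫ δ ≫ eD.inv = 0 := by
      rw [← F.map_preimage (eN.hom ≫ δ ≫ eD.inv)]
      exact (congrArg F.map h3).trans (F.map_zero _ _)
    rw [← cancel_mono eD.inv, ← cancel_epi eN.hom, this, zero_comp, comp_zero]
  have h5 : δ ≫ 𝟙 ((singleFunctor B 0).obj D) = 0 := by rw [h4, zero_comp]
  obtain ⟨g, hg⟩ : ∃ g, 𝟙 ((singleFunctor B 0).obj D) =
      (singleFunctor B 0).map (Pi.lift (fun w : D ⟶ C => w)) ≫ g :=
    Triangle.yoneda_exact₂ _ hT (𝟙 _) h5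
  refine ⟨(singleFunctor B 0).preimage g, (singleFunctor B 0).map_injective ?_⟩
  rw [Functor.map_comp, Functor.map_preimage, ← hg, CategoryTheory.Functor.map_id]
end
end Tilt
end PaperProof

namespace PaperProof
open DerivedCategory
open scoped ZeroObject
section Seq
variable {B : Type u₂} [Category.{v₂} B] [Abelian B]

section
variable (S : ShortComplex B) (obj : ℕ → B) (d : ∀ i, obj i ⟶ obj (i + 1)) (h1 : obj 1 = S.X₃)

/-- Splicing a short exact sequence to the left of an exact sequence: objects. -/
noncomputable def spliceObj : ℕ → B
  | 0 => 0
  | 1 => S.X₁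
  | 2 => S.X₂
  | k + 3 => obj (k + 2)

/-- Splicing a short exact sequence to the left of an exact sequence: maps. -/
noncomputable def spliceD : ∀ i, spliceObj S obj i ⟶ spliceObj S obj (i + 1)
  | 0 => (0 : (0 : B) ⟶ S.X₁)
  | 1 => S.f
  | 2 => S.g ≫ eqToHom h1.symm ≫ d 1
  | k + 3 => d (k + 2)
end

/-- Exactness of a composable pair. -/
def Ex {X Y Z : B} (f : X ⟶ Y) (g : Y ⟶ Z) : Prop :=
  ∃ w : f ≫ g = 0, (ShortComplex.mk f g w).Exact

lemma ex_right {X Y Z Z' : B} (f : X ⟶ Y) (g : Y ⟶ Z) (m : Z ⟶ Z') [Mono m] (h : Ex f g) :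
    Ex f (g ≫ m) := by
  obtain ⟨w, h⟩ := h
  have w' : f ≫ g ≫ m = 0 := by rw [reassoc_of% w, zero_comp]
  refine ⟨w', ?_⟩
  let φ : ShortComplex.mk f g w ⟶ ShortComplex.mk f (g ≫ m) w' :=
    { τ₁ := 𝟙 _, τ₂ := 𝟙 _, τ₃ := m }
  exact (ShortComplex.exact_iff_of_epi_of_isIso_of_mono φ).1 h

lemma ex_left {X' X Y Z : B} (f : X ⟶ Y) (g : Y ⟶ Z) (p : X' ⟶ X) [Epi p] (h : Ex f g) :
    Ex (p ≫ f) g := by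
  obtain ⟨w, h⟩ := h
  have w' : (p ≫ f) ≫ g = 0 := by rw [assoc, w, comp_zero]
  refine ⟨w', ?_⟩
  let φ : ShortComplex.mk (p ≫ f) g w' ⟶ ShortComplex.mk f g w :=
    { τ₁ := p, τ₂ := 𝟙 _, τ₃ := 𝟙 _ }
  exact (ShortComplex.exact_iff_of_epi_of_isIso_of_mono φ).2 h

lemma ex_mono {X Y Z : B} (f : X ⟶ Y) (g : Y ⟶ Z) (hX : IsZero X) (h : Ex f g) : Mono g := by
  obtain ⟨w, h⟩ := h
  exact (ShortComplex.exact_iff_mono _ (hX.eq_of_src _ _)).1 h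

lemma ex_of_mono {X Y Z : B} (f : X ⟶ Y) (g : Y ⟶ Z) (hX : IsZero X) (h : Mono g) : Ex f g :=
  ⟨hX.eq_of_src _ _, (ShortComplex.exact_iff_mono _ (hX.eq_of_src _ _)).2 h⟩

lemma ex_of_epi {X Y Z : B} (f : X ⟶ Y) (g : Y ⟶ Z) (hZ : IsZero Z) (h : Epi f) : Ex f g :=
  ⟨hZ.eq_of_tgt _ _, (ShortComplex.exact_iff_epi _ (hZ.eq_of_tgt _ _)).2 h⟩

lemma splice_ex (S : ShortComplex B) (hS : S.ShortExact) (obj : ℕ → B)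
    (d : ∀ i, obj i ⟶ obj (i + 1)) (h1 : obj 1 = S.X₃) (h0 : IsZero (obj 0))
    (h : ∀ i, Ex (d i) (d (i + 1))) : ∀ i, Ex (spliceD S obj d h1 i) (spliceD S obj d h1 (i + 1))
  | 0 => ex_of_mono (0 : (0 : B) ⟶ S.X₁) S.f (isZero_zero _) hS.mono_f
  | 1 => by
    have := ex_mono _ _ h0 (h 0)
    exact ex_right S.f S.g (eqToHom h1.symm ≫ d 1) ⟨S.zero, hS.exact⟩
  | 2 => by
    have := hS.epi_g
    have := ex_left _ _ (S.g ≫ eqToHom h1.symm) (h 1)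
    rw [assoc] at this
    exact this
  | k + 3 => h (k + 2)

/-- Objects of `0 → K → L → 0 → ⋯`. -/
noncomputable def baseObj (K L : B) : ℕ → B
  | 0 => 0
  | 1 => K
  | 2 => L
  | _ + 3 => 0

/-- Maps of `0 → K → L → 0 → ⋯`. -/
noncomputable def baseD {K L : B} (f : K ⟶ L) : ∀ i, baseObj K L i ⟶ baseObj K L (i + 1)
  | 0 => (0 : (0 : B) ⟶ K)
  | 1 => f
  | 2 => (0 : L ⟶ (0 : B))
  | _ + 3 => (0 : (0 : B) ⟶ (0 : B))

lemma base_ex {K L : B} (f : K ⟶ L) [IsIso f] : ∀ i, Ex (baseD f i) (baseD f (i + 1))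
  | 0 => ex_of_mono (0 : (0 : B) ⟶ K) f (isZero_zero _) inferInstance
  | 1 => ex_of_epi f (0 : L ⟶ (0 : B)) (isZero_zero _) inferInstance
  | 2 => ex_of_epi (0 : L ⟶ (0 : B)) (0 : (0 : B) ⟶ (0 : B)) (isZero_zero _)
    ⟨fun _ _ _ => (isZero_zero B).eq_of_src _ _⟩
  | k + 3 => ex_of_mono (0 : (0 : B) ⟶ (0 : B)) (0 : (0 : B) ⟶ (0 : B)) (isZero_zero _)
    ⟨fun _ _ _ => (isZero_zero B).eq_of_tgt _ _⟩

lemma eseq_chain (P : B → Prop) (L : B) (n : ℕ) (K : B) (h : ESeq P L n K) :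
    ∃ (obj : ℕ → B) (d : ∀ i, obj i ⟶ obj (i + 1)), (∀ i, Ex (d i) (d (i + 1))) ∧
      IsZero (obj 0) ∧ obj 1 = K ∧ obj (n + 2) = L ∧ IsZero (obj (n + 3)) ∧
      ∀ i, 2 ≤ i → i ≤ n + 1 → P (obj i) := by
  induction h with
  | base K e =>
    obtain ⟨e⟩ := e
    exact ⟨baseObj K L, baseD e.hom, base_ex e.hom, isZero_zero B, rfl, rfl, isZero_zero B,
      fun i h2 h1 => by omega⟩
  | step n S hS hP h ih =>
    obtain ⟨obj, d, hd, h0, h1, hL, hz, hP'⟩ := ih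
    refine ⟨spliceObj S obj, spliceD S obj d h1, splice_ex S hS obj d h1 h0 hd, isZero_zero B, rfl,
      hL, hz, ?_⟩
    intro i h2 h3
    match i, h2, h3 with
    | 2, _, _ => exact hP
    | k + 3, _, h3 => exact hP' (k + 2) (by omega) (by omega)

lemma exact_congr' {X Y Z : B} {f f' : X ⟶ Y} {g g' : Y ⟶ Z} (hf : f' = f) (hg : g' = g)
    (w : f ≫ g = 0) (h : (ShortComplex.mk f g w).Exact) (w' : f' ≫ g' = 0) :
    (ShortComplex.mk f' g' w').Exact := by
  subst hf hg; exact h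

lemma eseq_arrows (P : B → Prop) (L : B) (n : ℕ) (K : B) (h : ESeq P L n K) :
    ∃ S : ComposableArrows B (n + 3), S.Exact ∧ IsZero (S.obj 0) ∧
      IsZero (S.obj (Fin.last (n + 3))) ∧ S.obj ⟨1, by omega⟩ = K ∧
      (∀ (i : ℕ) (_ : 2 ≤ i) (_ : i ≤ n + 1), P (S.obj ⟨i, by omega⟩)) ∧
      S.obj ⟨n + 2, by omega⟩ = L := by
  obtain ⟨obj, d, hd, h0, h1, hL, hz, hP⟩ := eseq_chain P L n K h
  let S : ComposableArrows B (n + 3) :=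
    ComposableArrows.mkOfObjOfMapSucc (fun i : Fin (n + 3 + 1) => obj i.val) (fun i => d i.val)
  have hmap : ∀ (i : ℕ) (hi : i < n + 3), S.map' i (i + 1) = d i := fun i hi =>
    ComposableArrows.mkOfObjOfMapSucc_map_succ _ _ i hi
  have hc : S.IsComplex := ⟨fun i hi => by
    have h1 := hmap i (by omega)
    have h2 := hmap (i + 1) (by omega)
    exact (congrArg₂ (fun (a : obj i ⟶ obj (i + 1)) (b : obj (i + 1) ⟶ obj (i + 1 + 1)) => a ≫ b)
      h1 h2).trans (hd i).1⟩
  refine ⟨S, ⟨hc, fun i hi => ?_⟩, h0, hz, h1, fun i h2 h3 => hP i h2 h3, hL⟩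
  exact exact_congr' (X := obj i) (Y := obj (i + 1)) (Z := obj (i + 1 + 1))
    (hmap i (by omega)) (hmap (i + 1) (by omega)) (hd i).1 (hd i).2 _

lemma inj_res [HasExt.{e} B] [EnoughInjectives B] (n : ℕ) :
    ∀ C : B, (∀ M : B, Subsingleton (Abelian.Ext.{e} M C (n + 1))) →
    ∃ (L : B) (_ : Injective L), ESeq Injective L n C := by
  induction n with
  | zero =>
    intro C h
    exact ⟨C, injective_iff_subsingleton_ext_one.2 h, ESeq.base C ⟨Iso.refl _⟩⟩
  | succ n ih =>
    intro C h
    let S := ShortComplex.mk (Injective.ι C) (cokernel.π (Injective.ι C)) (cokernel.condition _)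
    have hS : S.ShortExact := { exact := ShortComplex.exact_cokernel _ }
    have hI : Injective S.X₂ := inferInstanceAs (Injective (Injective.under C))
    obtain ⟨L, hL, hs⟩ := ih S.X₃ fun M => by
      refine ⟨fun x y => ?_⟩
      suffices ∀ x : Abelian.Ext.{e} M S.X₃ (n + 1), x = 0 by rw [this x, this y]
      intro x
      have := h M
      obtain ⟨x₂, hx⟩ := Abelian.Ext.covariant_sequence_exact₃ (hS := hS) (X := M) x rfl
        (Subsingleton.elim (α := Abelian.Ext.{e} M C (n + 1 + 1)) _ _)
      rw [← hx, Abelian.Ext.eq_zero_of_injective x₂, Abelian.Ext.zero_comp]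
    exact ⟨L, hL, ESeq.step n S hS hI hs⟩

end Seq
end PaperProof

namespace PaperProof
lemma isGE_of_iso' {C : Type u} [Category.{v} C] [Abelian C] [HasDerivedCategory.{w} C]
    {X Y : DerivedCategory C} (e : X ≅ Y) (n : ℤ) (h : X.IsGE n) : Y.IsGE n := by
  rw [isGE_iff] at h ⊢
  exact fun i hi => isZero_hom_of_iso e i (h i hi)
end PaperProof

theorem statement1 (G : Type u) [Category.{v} G] [Abelian G]
    [HasFilteredColimits G] [AB5 G] [HasSeparator G]
    [HasDerivedCategory.{w} G] [HasExt.{w} G]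
    (T W : G) (hWinj : Injective W) (hWcogen : IsCoseparator W)
    (R : Type v₂) [Ring R]
    [HasDerivedCategory.{w₂} (ModuleCat.{v₂} R)] [HasExt.{e} (ModuleCat.{v₂} R)]
    (E : TriangleEquivalenceData (DerivedCategory G) (DerivedCategory (ModuleCat.{v₂} R)))
    (hE : Nonempty (E.functor.obj ((singleFunctor G 0).obj T)
        ≅ (singleFunctor (ModuleCat.{v₂} R) 0).obj (ModuleCat.of R R))) :
    (∀ i : ℤ, i ≠ 0 →
      IsZero ((homologyFunctor (ModuleCat.{v₂} R) i).obj
        (E.functor.obj ((singleFunctor G 0).obj W)))) ∧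
    (∃ C : ModuleCat.{v₂} R,
      Nonempty (E.functor.obj ((singleFunctor G 0).obj W)
        ≅ (singleFunctor (ModuleCat.{v₂} R) 0).obj C)) ∧
    (∀ n : ℕ, (∀ X : G, Subsingleton (Abelian.Ext T X (n + 1))) →
      ∀ C : ModuleCat.{v₂} R,
        Nonempty (E.functor.obj ((singleFunctor G 0).obj W)
          ≅ (singleFunctor (ModuleCat.{v₂} R) 0).obj C) →
        IsBigNCotilting n C) := by
  obtain ⟨eT⟩ := hE
  letI := E.commShift
  haveI := E.isTriangulated
  haveI := E.isEquivalence
  haveI : HasCoproducts.{v} G := hasCoproducts_of_finite_and_filtered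
  haveI : HasColimits G := has_colimits_of_hasCoequalizers_and_coproducts
  haveI : IsGrothendieckAbelian.{v} G := { }
  haveI : HasFiniteBiproducts G := Abelian.hasFiniteBiproducts
  haveI : AB4.{v} G := AB4.of_AB5 G
  haveI : HasCoproducts.{0} G := hasCoproducts_shrink.{0, v}
  haveI : AB4OfSize.{0} G := AB4OfSize_shrink.{0, v} G
  haveI : HasCoproducts.{0} (ModuleCat.{v₂} R) := hasCoproducts_shrink.{0, v₂}
  haveI : AB4OfSize.{0} (ModuleCat.{v₂} R) := AB4OfSize_shrink.{0, v₂} _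
  haveI : HasExactColimitsOfShape (Discrete ℤ) G := inferInstance
  haveI : HasExactColimitsOfShape (Discrete ℤ) (ModuleCat.{v₂} R) := inferInstance
  haveI : EnoughInjectives G := inferInstance
  haveI : EnoughInjectives (ModuleCat.{v₂} R) := inferInstance
  have hU : IsSeparator (ModuleCat.of R R) := fun X Y f g h => by
    simp only [ObjectProperty.singleton_iff, ModuleCat.hom_ext_iff, ModuleCat.hom_comp,
      LinearMap.ext_iff, LinearMap.coe_comp, Function.comp_apply, forall_eq'] at h
    ext x
    simpa using h (ModuleCat.ofHom (LinearMap.toSpanSingleton R X x)) 1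
  have hv : ∀ i : ℤ, i ≠ 0 → IsZero ((homologyFunctor (ModuleCat.{v₂} R) i).obj
        (E.functor.obj ((singleFunctor G 0).obj W))) :=
    fun i hi => PaperProof.inj_F E.functor eT hU W i hi
  refine ⟨hv, ?_, ?_⟩
  · haveI : (E.functor.obj ((singleFunctor G 0).obj W)).IsGE 0 :=
      (isGE_iff _ _).2 fun i hi => hv i hi.ne
    haveI : (E.functor.obj ((singleFunctor G 0).obj W)).IsLE 0 :=
      (isLE_iff _ _).2 fun i hi => hv i hi.ne'
    exact exists_iso_singleFunctor_obj_of_isGE_of_isLE _ 0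
  · rintro n hn C ⟨eW⟩
    refine ⟨?_, ?_, ?_⟩
    · have hext : ∀ M : ModuleCat.{v₂} R, Subsingleton (Abelian.Ext.{e} M C (n + 1)) := fun M => by
        let eY := E.functor.objObjPreimageIso ((singleFunctor (ModuleCat.{v₂} R) 0).obj M)
        have hge : (E.functor.obj (E.functor.objPreimage
            ((singleFunctor (ModuleCat.{v₂} R) 0).obj M))).IsGE 0 :=
          PaperProof.isGE_of_iso' eY.symm 0 inferInstance
        have := PaperProof.ge_of_F E.functor eT hU n hn _ hge
        exact PaperProof.ext_vanish E.functor eW M _ eY (n + 1)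
          (isZero_of_isGE _ (-n) _ (by push_cast; omega))
      obtain ⟨L, hL, hs⟩ := PaperProof.inj_res n C hext
      obtain ⟨S, hS, h0, hl, h1, hP, hL'⟩ := PaperProof.eseq_arrows _ _ _ _ hs
      refine ⟨S, hS, h0, hl, ⟨eqToIso h1⟩, fun i h2 h3 => ?_⟩
      rcases h3.lt_or_eq with h3 | rfl
      · exact hP i h2 (by omega)
      · rw [hL']; exact hL
    · intro ι j hj
      let eY := E.functor.objObjPreimageIso
        ((singleFunctor (ModuleCat.{v₂} R) 0).obj (∏ᶜ (fun _ : ι => C)))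
      have := PaperProof.prod_GE E.functor eW _ eY
      exact PaperProof.ext_vanish E.functor eW _ _ eY j (isZero_of_isGE _ 0 _ (by omega))
    · obtain ⟨L, hL, hLc⟩ := Abelian.has_injective_coseparator (ModuleCat.of R R) hU
      let eY := E.functor.objObjPreimageIso ((singleFunctor (ModuleCat.{v₂} R) 0).obj L)
      have hge : (E.functor.obj (E.functor.objPreimage
          ((singleFunctor (ModuleCat.{v₂} R) 0).obj L))).IsGE 0 :=
        PaperProof.isGE_of_iso' eY.symm 0 inferInstance
      have hstar := PaperProof.star_of_inj E.functor eT hU _ L eY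
      obtain ⟨r, K, hK, hs⟩ := PaperProof.resolve E.functor eT hU (InProdOf C) L
        (fun I hI D ⟨eD⟩ => by
          obtain ⟨r, hr⟩ := PaperProof.inj_summand E.functor eW hWcogen I D eD
          exact ⟨D ⟶ C, _, r, hr⟩) n _
        (PaperProof.ge_of_F E.functor eT hU n hn _ hge) hstar hge 0
        (PaperProof.ESeq.base _ ⟨(homologyFunctor _ 0).mapIso eY ≪≫
          (singleFunctorCompHomologyFunctorIso _ 0).app L⟩)
      obtain ⟨S, hS, h0, hl, h1, hP, hL'⟩ := PaperProof.eseq_arrows _ _ _ _ hs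
      refine ⟨r, S, hS, h0, hl, fun i h2 h3 => ?_, ?_, ?_⟩
      · rcases h2.lt_or_eq with h2 | rfl
        · exact hP i h2 h3
        · rw [h1]; exact hK
      · rw [hL']; exact hL
      · rw [hL']; exact hLc
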